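/- For every real parameter a > 1/2, the function f_*(s) := d/ds (A(s)·cosh(φ(s))) is odd in s, satisfies f_*(0) = 0 and f_*'(0) = 2·√(a + 1/2) > 0, and solves the self-adjoint mode-one Jacobi equation (B·f_*')'(s) + B(s)·(|II|²(s) − 2 − 1/B(s)²)·f_*(s) = 0 for all s ∈ ℝ, where |II|²(s) := 2·(B''(s)/B(s) − 1). -/

import Mathlib

namespace MoriCatenoid

/-- Profile function `B(s) = √(a·cosh(2s) − 1/2)` of the Mori family. -/
noncomputable def B (a s : ℝ) : ℝ := Real.sqrt (a * Real.cosh (2 * s) - 1 / 2)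

/-- Profile function `A(s) = √(a·cosh(2s) + 1/2)` of the Mori family. -/
noncomputable def A (a s : ℝ) : ℝ := Real.sqrt (a * Real.cosh (2 * s) + 1 / 2)

/-- The constant `K = √(a² − 1/4)`. -/
noncomputable def K (a : ℝ) : ℝ := Real.sqrt (a ^ 2 - 1 / 4)

/-- The angle function `φ(s) = K·∫₀ˢ dt/(A(t)²·B(t))`. -/
noncomputable def φ (a s : ℝ) : ℝ := K a * ∫ t in (0:ℝ)..s, 1 / ((A a t) ^ 2 * B a t)

/-- The mode-one Jacobi field `f_*(s) = d/ds (A(s)·cosh(φ(s)))`. -/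
noncomputable def fstar (a s : ℝ) : ℝ := deriv (fun t => A a t * Real.cosh (φ a t)) s

/-- Squared norm of the second fundamental form, `|II|²(s) = 2·(B''(s)/B(s) − 1)`. -/
noncomputable def IIsq (a s : ℝ) : ℝ := 2 * (deriv (deriv (B a)) s / B a s - 1)

/-- The mode-`k` potential `W_k(s) = |II|²(s) − 2 − k²/B(s)²`. -/
noncomputable def W (a : ℝ) (k : ℤ) (s : ℝ) : ℝ := IIsq a s - 2 - (k : ℝ) ^ 2 / (B a s) ^ 2

/-- Inverse hyperbolic cosine: `arcosh x = log (x + √(x² − 1))`. -/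
noncomputable def arcosh (x : ℝ) : ℝ := Real.log (x + Real.sqrt (x ^ 2 - 1))

/-- The axial boost field `u_*(s) = −a·sinh(2s)/B(s)`. -/
noncomputable def ustar (a s : ℝ) : ℝ := -a * Real.sinh (2 * s) / B a s

/-- The radial quadratic form of mode `k`:
`S_k(u) = ∫_{−s₀}^{s₀} (B·u'² − B·W_k·u²) − coth(r)·B(s₀)·(u(s₀)² + u(−s₀)²)`,
where `u'` is the derivative of `u` within `[−s₀, s₀]`. -/
noncomputable def Sk (a s₀ r : ℝ) (k : ℤ) (u : ℝ → ℝ) : ℝ :=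
  (∫ s in (-s₀)..s₀,
      (B a s * (derivWithin u (Set.Icc (-s₀) s₀) s) ^ 2 - B a s * W a k s * u s ^ 2))
    - Real.cosh r / Real.sinh r * B a s₀ * (u s₀ ^ 2 + u (-s₀) ^ 2)

lemma B_rad_pos (a : ℝ) (ha : 1 / 2 < a) (s : ℝ) : 0 < a * Real.cosh (2 * s) - 1 / 2 := by
  nlinarith [Real.one_le_cosh (2 * s)]

lemma B_pos (a : ℝ) (ha : 1 / 2 < a) (s : ℝ) : 0 < B a s := Real.sqrt_pos.2 (B_rad_pos a ha s)

lemma A_pos (a : ℝ) (ha : 1 / 2 < a) (s : ℝ) : 0 < A a s :=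
  Real.sqrt_pos.2 (by linarith [B_rad_pos a ha s])

lemma B_sq (a : ℝ) (ha : 1 / 2 < a) (s : ℝ) : B a s ^ 2 = a * Real.cosh (2 * s) - 1 / 2 :=
  Real.sq_sqrt (B_rad_pos a ha s).le

lemma A_sq (a : ℝ) (ha : 1 / 2 < a) (s : ℝ) : A a s ^ 2 = a * Real.cosh (2 * s) + 1 / 2 :=
  Real.sq_sqrt (by linarith [B_rad_pos a ha s])

lemma K_sq (a : ℝ) (ha : 1 / 2 < a) : K a ^ 2 = a ^ 2 - 1 / 4 :=
  Real.sq_sqrt (by nlinarith)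

lemma hasDerivAt_x (a s : ℝ) :
    HasDerivAt (fun t => a * Real.cosh (2 * t)) (2 * (a * Real.sinh (2 * s))) s := by
  have h := (((hasDerivAt_id s).const_mul 2).cosh).const_mul a
  simp only [id] at h
  exact h.congr_deriv (by ring)

lemma hasDerivAt_T (a s : ℝ) :
    HasDerivAt (fun t => a * Real.sinh (2 * t)) (2 * (a * Real.cosh (2 * s))) s := by
  have h := (((hasDerivAt_id s).const_mul 2).sinh).const_mul a
  simp only [id] at h
  exact h.congr_deriv (by ring)

lemma hasDerivAt_B (a : ℝ) (ha : 1 / 2 < a) (s : ℝ) :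
    HasDerivAt (B a) (a * Real.sinh (2 * s) / B a s) s := by
  have h := ((hasDerivAt_x a s).sub_const (1 / 2)).sqrt (B_rad_pos a ha s).ne'
  refine h.congr_deriv ?_
  change _ / (2 * B a s) = _
  have := B_pos a ha s
  field_simp

lemma hasDerivAt_A (a : ℝ) (ha : 1 / 2 < a) (s : ℝ) :
    HasDerivAt (A a) (a * Real.sinh (2 * s) / A a s) s := by
  have h := ((hasDerivAt_x a s).add_const (1 / 2)).sqrt (by linarith [B_rad_pos a ha s])
  refine h.congr_deriv ?_
  change _ / (2 * A a s) = _
  have := A_pos a ha s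
  field_simp

lemma cont_B (a : ℝ) (ha : 1 / 2 < a) : Continuous (B a) :=
  continuous_iff_continuousAt.2 fun s => (hasDerivAt_B a ha s).continuousAt

lemma cont_A (a : ℝ) (ha : 1 / 2 < a) : Continuous (A a) :=
  continuous_iff_continuousAt.2 fun s => (hasDerivAt_A a ha s).continuousAt

lemma hasDerivAt_φ (a : ℝ) (ha : 1 / 2 < a) (s : ℝ) :
    HasDerivAt (φ a) (K a / (A a s ^ 2 * B a s)) s := by
  have hc : Continuous (fun t => 1 / ((A a t) ^ 2 * B a t)) := by
    refine continuous_const.div (((cont_A a ha).pow 2).mul (cont_B a ha)) fun t => ?_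
    have := A_pos a ha t
    have := B_pos a ha t
    positivity
  have h := (hc.integral_hasStrictDerivAt 0 s).hasDerivAt.const_mul (K a)
  exact h.congr_deriv (by ring)

lemma B_neg (a s : ℝ) : B a (-s) = B a s := by simp [B]

lemma A_neg (a s : ℝ) : A a (-s) = A a s := by simp [A]

lemma φ_neg (a s : ℝ) : φ a (-s) = - φ a s := by
  have h := intervalIntegral.integral_comp_neg (a := 0) (b := s)
    (fun t => 1 / ((A a t) ^ 2 * B a t))
  simp only [A_neg, B_neg, neg_zero] at h
  unfold φ
  rw [intervalIntegral.integral_symm, ← h]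
  ring

lemma φ_zero (a : ℝ) : φ a 0 = 0 := by simp [φ]

lemma fstar_eq (a : ℝ) (ha : 1 / 2 < a) (s : ℝ) :
    fstar a s = a * Real.sinh (2 * s) / A a s * Real.cosh (φ a s)
      + K a / (A a s * B a s) * Real.sinh (φ a s) := by
  have h := ((hasDerivAt_A a ha s).mul (hasDerivAt_φ a ha s).cosh).deriv
  refine h.trans ?_
  have := A_pos a ha s
  have := B_pos a ha s
  field_simp

lemma T_sq (a s : ℝ) : (a * Real.sinh (2 * s)) ^ 2 = (a * Real.cosh (2 * s)) ^ 2 - a ^ 2 := by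
  rw [mul_pow, Real.sinh_sq]; ring

lemma deriv_fstar (a : ℝ) (ha : 1 / 2 < a) (s : ℝ) :
    deriv (fstar a) s =
      ((a * Real.cosh (2 * s)) ^ 2 + a ^ 2 - 1 / 2) / (A a s * B a s ^ 2) * Real.cosh (φ a s)
      - K a * (a * Real.sinh (2 * s)) / (A a s * B a s ^ 3) * Real.sinh (φ a s) := by
  have hA := A_pos a ha s
  have hB := B_pos a ha s
  have h := ((((hasDerivAt_T a s).div (hasDerivAt_A a ha s) hA.ne').mul
      (hasDerivAt_φ a ha s).cosh).add
    (((hasDerivAt_const s (K a)).div ((hasDerivAt_A a ha s).mul (hasDerivAt_B a ha s))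
      (mul_pos hA hB).ne').mul (hasDerivAt_φ a ha s).sinh)).deriv
  have e : fstar a = _ := funext (fstar_eq a ha)
  rw [e]
  refine h.trans ?_
  simp only [Pi.mul_apply, Pi.div_apply]
  have h1 := A_sq a ha s
  have h2 := B_sq a ha s
  have h3 := K_sq a ha
  have h4 := T_sq a s
  generalize a * Real.cosh (2 * s) = x at *
  generalize a * Real.sinh (2 * s) = T at *
  generalize A a s = P at *
  generalize B a s = Q at *
  generalize K a = k at *
  generalize Real.cosh (φ a s) = C at *
  generalize Real.sinh (φ a s) = H at *
  obtain rfl : x = Q ^ 2 + 1 / 2 := by linarith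
  have h1' : P ^ 2 = Q ^ 2 + 1 := by linarith
  field_simp
  grind

lemma deriv2_B (a : ℝ) (ha : 1 / 2 < a) (s : ℝ) :
    deriv (deriv (B a)) s =
      2 * (a * Real.cosh (2 * s)) / B a s - (a * Real.sinh (2 * s)) ^ 2 / B a s ^ 3 := by
  have hB := B_pos a ha s
  have e : deriv (B a) = _ := funext fun s => (hasDerivAt_B a ha s).deriv
  rw [e]
  refine ((hasDerivAt_T a s).div (hasDerivAt_B a ha s) hB.ne').deriv.trans ?_
  field_simp

lemma jacobi (a : ℝ) (ha : 1 / 2 < a) (s : ℝ) :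
    deriv (fun t => B a t * deriv (fstar a) t) s
        + B a s * (IIsq a s - 2 - 1 / B a s ^ 2) * fstar a s = 0 := by
  have hA := A_pos a ha s
  have hB := B_pos a ha s
  have e : (fun t => B a t * deriv (fstar a) t) = fun t =>
      ((a * Real.cosh (2 * t)) ^ 2 + a ^ 2 - 1 / 2) / (A a t * B a t) * Real.cosh (φ a t)
      - K a * (a * Real.sinh (2 * t)) / (A a t * B a t ^ 2) * Real.sinh (φ a t) := by
    funext t
    have hA := A_pos a ha t
    have hB := B_pos a ha t
    rw [deriv_fstar a ha]
    field_simp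
  have h := ((((((hasDerivAt_x a s).pow 2).add_const (a ^ 2)).sub_const (1 / 2)).div
      ((hasDerivAt_A a ha s).mul (hasDerivAt_B a ha s)) (mul_pos hA hB).ne').mul
      (hasDerivAt_φ a ha s).cosh).sub
    ((((hasDerivAt_T a s).const_mul (K a)).div
      ((hasDerivAt_A a ha s).mul ((hasDerivAt_B a ha s).pow 2))
      (mul_pos hA (pow_pos hB 2)).ne').mul (hasDerivAt_φ a ha s).sinh)
  have h' := h.deriv
  rw [e, IIsq, deriv2_B a ha, fstar_eq a ha]
  refine (congrArg (· + _) h').trans ?_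
  simp only [Pi.mul_apply, Pi.div_apply, Pi.pow_apply]
  have h1 := A_sq a ha s
  have h2 := B_sq a ha s
  have h3 := K_sq a ha
  have h4 := T_sq a s
  clear h h' e
  generalize a * Real.cosh (2 * s) = x at *
  generalize a * Real.sinh (2 * s) = T at *
  generalize A a s = P at *
  generalize B a s = Q at *
  generalize K a = k at *
  generalize Real.cosh (φ a s) = C at *
  generalize Real.sinh (φ a s) = H at *
  obtain rfl : x = Q ^ 2 + 1 / 2 := by linarith
  have h1' : P ^ 2 = Q ^ 2 + 1 := by linarith
  field_simp
  grind

/-- The field `f_*(s) = d/ds (A(s)·cosh(φ(s)))` is odd, vanishes at `0`, has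
`f_*'(0) = 2·√(a + 1/2) > 0`, and solves the self-adjoint mode-one Jacobi
equation `(B·f_*')' + B·(|II|² − 2 − 1/B²)·f_* = 0` on `ℝ`. -/
theorem fstar_properties (a : ℝ) (ha : 1 / 2 < a) :
    (∀ s : ℝ, fstar a (-s) = - fstar a s) ∧
    fstar a 0 = 0 ∧
    deriv (fstar a) 0 = 2 * Real.sqrt (a + 1 / 2) ∧
    0 < deriv (fstar a) 0 ∧
    ∀ s : ℝ, deriv (fun t => B a t * deriv (fstar a) t) s
        + B a s * (IIsq a s - 2 - 1 / B a s ^ 2) * fstar a s = 0 := by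
  have h0 : deriv (fstar a) 0 = 2 * Real.sqrt (a + 1 / 2) := by
    have h1 := A_sq a ha 0
    have h2 := B_sq a ha 0
    have hA := A_pos a ha 0
    have hB := B_pos a ha 0
    have hAe : A a 0 = Real.sqrt (a + 1 / 2) := by simp [A]
    rw [deriv_fstar a ha, φ_zero, ← hAe]
    simp only [mul_zero, Real.cosh_zero, Real.sinh_zero, mul_one, sub_zero] at *
    field_simp
    rw [h1, h2]
    ring
  refine ⟨fun s => ?_, ?_, h0, ?_, jacobi a ha⟩
  · rw [fstar_eq a ha, fstar_eq a ha, A_neg, B_neg, φ_neg, mul_neg, Real.sinh_neg, Real.sinh_neg,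
      Real.cosh_neg]
    ring
  · rw [fstar_eq a ha, φ_zero]
    simp
  · rw [h0]
    have : 0 < a + 1 / 2 := by linarith
    positivity

end MoriCatenoid
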